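/- Evolution of the mixed Fisher term under the relaxation collision operator: if h : [0,∞) × 𝕋^d × ℝ^d → ℝ is smooth, bounded above and below by positive constants, has all partial derivatives bounded, and solves ∂_t h = λ(Πh − h) with λ > 0, then for every ε > 0 and all t ≥ 0: (d/dt) I^M(h_t) ≤ λ ε I^{ΠV/V}(h_t) + (λ/ε) I^{ΠX/X}(h_t) − λ I^M(h_t). -/

import Mathlib

/-!
Write `g = ∂ₜh`. The equation says `Πh = h + g / λ` at every time `t ≥ 0`, so `Πh` inherits
smoothness and bounded derivatives from `h`, and, as `Πh` does not depend on `v`,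
`∂_{v_i} g = -λ ∂_{v_i} h`. Differentiating `(∇ₓh · ∇ᵥh) / h` in time (second derivatives commute)
gives the pointwise identity
`∂ₜ ((∇ₓh · ∇ᵥh) / h) = λ ∇ₓ(Πh / h) · ∇ᵥh - λ (∇ₓh · ∇ᵥh) / h`,
and Young's inequality with weight `Πh / h²` bounds the first term by the integrands of
`λ ε I^{ΠV/V}` and `(λ / ε) I^{ΠX/X}`.

All integrands are bounded and continuous, hence integrable against the finite measure `ℳ dv dx`.
This justifies the differentiation under the integral (`hasDerivAt_intMu`) and the integration of
the pointwise inequality (`intMu_le_of_le`). No integration by parts is involved.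
-/

open MeasureTheory Real Filter

noncomputable section

/-- The standard Gaussian density `ℳ(v) = (2π)^{-d/2} exp(-|v|²/2)` on `ℝ^d`. -/
def gauss (d : ℕ) (v : Fin d → ℝ) : ℝ :=
  (2 * Real.pi) ^ (-(d : ℝ) / 2) * Real.exp (-(∑ i, v i ^ 2) / 2)

/-- Fundamental domain `[0,1]^d` of the torus `𝕋^d`; the normalized Lebesgue measure on
the torus is the restriction of Lebesgue measure to this cube. -/
def cube (d : ℕ) : Set (Fin d → ℝ) := Set.Icc 0 1

/-- A function of `(x,v)` represents a function on `𝕋^d × ℝ^d` iff it is `ℤ^d`-periodic in `x`. -/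
def IsPeriodic (d : ℕ) (f : (Fin d → ℝ) → (Fin d → ℝ) → ℝ) : Prop :=
  ∀ (x v : Fin d → ℝ) (k : Fin d → ℤ), f (x + fun i => (k i : ℝ)) v = f x v

/-- The projection `Πf(x) = ∫ f(x,u) ℳ(u) du`. -/
def proj (d : ℕ) (f : (Fin d → ℝ) → (Fin d → ℝ) → ℝ) (x : Fin d → ℝ) : ℝ :=
  ∫ u, f x u * gauss d u

/-- Euclidean dot product on `ℝ^d`. -/
def dotp (d : ℕ) (a b : Fin d → ℝ) : ℝ := ∑ i, a i * b i

/-- Squared Euclidean norm on `ℝ^d`. -/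
def nsq (d : ℕ) (a : Fin d → ℝ) : ℝ := ∑ i, a i ^ 2

/-- Gradient in the `x` variable. -/
def gradx (d : ℕ) (f : (Fin d → ℝ) → (Fin d → ℝ) → ℝ) (x v : Fin d → ℝ) : Fin d → ℝ :=
  fun i => fderiv ℝ (fun y => f y v) x (Pi.single i 1)

/-- Gradient in the `v` variable. -/
def gradv (d : ℕ) (f : (Fin d → ℝ) → (Fin d → ℝ) → ℝ) (x v : Fin d → ℝ) : Fin d → ℝ :=
  fun i => fderiv ℝ (fun w => f x w) v (Pi.single i 1)

/-- Gradient of a function of `x` only. -/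
def grad1 (d : ℕ) (g : (Fin d → ℝ) → ℝ) (x : Fin d → ℝ) : Fin d → ℝ :=
  fun i => fderiv ℝ g x (Pi.single i 1)

/-- Laplacian in the `v` variable. -/
def lapv (d : ℕ) (f : (Fin d → ℝ) → (Fin d → ℝ) → ℝ) (x v : Fin d → ℝ) : ℝ :=
  ∑ i, fderiv ℝ (fun w => gradv d f x w i) v (Pi.single i 1)

/-- Integral against `μ = ℳ(v) dv dx` on `𝕋^d × ℝ^d`. -/
def intMu (d : ℕ) (F : (Fin d → ℝ) → (Fin d → ℝ) → ℝ) : ℝ :=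
  ∫ x in cube d, ∫ v, F x v * gauss d v

/-- `I^X(h) = ∫ |∇_x h|²/h dμ`. -/
def IX (d : ℕ) (h : (Fin d → ℝ) → (Fin d → ℝ) → ℝ) : ℝ :=
  intMu d fun x v => nsq d (gradx d h x v) / h x v

/-- `I^V(h) = ∫ |∇_v h|²/h dμ`. -/
def IV (d : ℕ) (h : (Fin d → ℝ) → (Fin d → ℝ) → ℝ) : ℝ :=
  intMu d fun x v => nsq d (gradv d h x v) / h x v

/-- `I^M(h) = ∫ (∇_x h · ∇_v h)/h dμ`. -/
def IM (d : ℕ) (h : (Fin d → ℝ) → (Fin d → ℝ) → ℝ) : ℝ :=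
  intMu d fun x v => dotp d (gradx d h x v) (gradv d h x v) / h x v

/-- The full Fisher information `I(h) = ∫ |∇_{x,v} h|²/h dμ`. -/
def Ifull (d : ℕ) (h : (Fin d → ℝ) → (Fin d → ℝ) → ℝ) : ℝ :=
  intMu d fun x v => (nsq d (gradx d h x v) + nsq d (gradv d h x v)) / h x v

/-- `I^{ΠX}(h) = ∫_{𝕋^d} |∇_x Πh|²/Πh dx`. -/
def IPiX (d : ℕ) (h : (Fin d → ℝ) → (Fin d → ℝ) → ℝ) : ℝ :=
  ∫ x in cube d, nsq d (grad1 d (proj d h) x) / proj d h x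

/-- `I^{ΠX/X}(h) = ∫ (|∇_x(Πh/h)|²/(Πh/h)) h dμ`. -/
def IPiXX (d : ℕ) (h : (Fin d → ℝ) → (Fin d → ℝ) → ℝ) : ℝ :=
  intMu d fun x v =>
    nsq d (gradx d (fun y w => proj d h y / h y w) x v) / (proj d h x / h x v) * h x v

/-- `I^{ΠV/V}(h) = ∫ (|∇_v h|²/h)(Πh/h) dμ`. -/
def IPiVV (d : ℕ) (h : (Fin d → ℝ) → (Fin d → ℝ) → ℝ) : ℝ :=
  intMu d fun x v => nsq d (gradv d h x v) / h x v * (proj d h x / h x v)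

/-- The relative entropy `H(h) = ∫ h log h dμ`. -/
def Hent (d : ℕ) (h : (Fin d → ℝ) → (Fin d → ℝ) → ℝ) : ℝ :=
  intMu d fun x v => h x v * Real.log (h x v)

/-- The projected entropy `H_Π(h) = ∫_{𝕋^d} Πh log Πh dx`. -/
def HPi (d : ℕ) (h : (Fin d → ℝ) → (Fin d → ℝ) → ℝ) : ℝ :=
  ∫ x in cube d, proj d h x * Real.log (proj d h x)

/-- The local average speed `U(x) = ∫ v h(x,v) ℳ(v) dv`. -/
def Uvec (d : ℕ) (h : (Fin d → ℝ) → (Fin d → ℝ) → ℝ) (x : Fin d → ℝ) : Fin d → ℝ :=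
  fun i => ∫ v, v i * h x v * gauss d v

/-- The divergence `∇_x · U`. -/
def divU (d : ℕ) (h : (Fin d → ℝ) → (Fin d → ℝ) → ℝ) (x : Fin d → ℝ) : ℝ :=
  ∑ i, fderiv ℝ (fun y => Uvec d h y i) x (Pi.single i 1)

/-- The `p`-entropy `H^{(p)}(h) = ∫ (h^p - h)/(p(p-1)) dμ`. -/
def Hp (d : ℕ) (p : ℝ) (h : (Fin d → ℝ) → (Fin d → ℝ) → ℝ) : ℝ :=
  intMu d fun x v => (h x v ^ p - h x v) / (p * (p - 1))

/-- The projected `p`-entropy `H_Π^{(p)}(h) = ∫_{𝕋^d} ((Πh)^p - Πh)/(p(p-1)) dx`. -/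
def HpPi (d : ℕ) (p : ℝ) (h : (Fin d → ℝ) → (Fin d → ℝ) → ℝ) : ℝ :=
  ∫ x in cube d, ((proj d h x) ^ p - proj d h x) / (p * (p - 1))

/-- The `p`-Fisher information `I^{(p)}(h) = ∫ h^{p-2} |∇_{x,v} h|² dμ`. -/
def Ipfull (d : ℕ) (p : ℝ) (h : (Fin d → ℝ) → (Fin d → ℝ) → ℝ) : ℝ :=
  intMu d fun x v => h x v ^ (p - 2) * (nsq d (gradx d h x v) + nsq d (gradv d h x v))

/-- The spatial `p`-Fisher information `∫ h^{p-2} |∇_x h|² dμ`. -/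
def IpX (d : ℕ) (p : ℝ) (h : (Fin d → ℝ) → (Fin d → ℝ) → ℝ) : ℝ :=
  intMu d fun x v => h x v ^ (p - 2) * nsq d (gradx d h x v)

/-- Regularity of a time-dependent `h`: smooth, periodic in `x`, bounded above and below by
positive constants, with all partial derivatives bounded. -/
def Regular (d : ℕ) (h : ℝ → (Fin d → ℝ) → (Fin d → ℝ) → ℝ) : Prop :=
  ContDiff ℝ (⊤ : ℕ∞) (fun q : ℝ × (Fin d → ℝ) × (Fin d → ℝ) => h q.1 q.2.1 q.2.2) ∧
  (∀ t, IsPeriodic d (h t)) ∧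
  (∃ c C : ℝ, 0 < c ∧ ∀ t x v, c ≤ h t x v ∧ h t x v ≤ C) ∧
  (∀ n : ℕ, ∃ C : ℝ, ∀ q : ℝ × (Fin d → ℝ) × (Fin d → ℝ),
    ‖iteratedFDeriv ℝ n (fun r : ℝ × (Fin d → ℝ) × (Fin d → ℝ) => h r.1 r.2.1 r.2.2) q‖ ≤ C)

/-- Regularity of a time-independent `h`: smooth, periodic in `x`, bounded above and below by
positive constants, with bounded gradient. -/
def RegularStatic (d : ℕ) (h : (Fin d → ℝ) → (Fin d → ℝ) → ℝ) : Prop :=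
  ContDiff ℝ (⊤ : ℕ∞) (fun q : (Fin d → ℝ) × (Fin d → ℝ) => h q.1 q.2) ∧
  IsPeriodic d h ∧
  (∃ c C : ℝ, 0 < c ∧ ∀ x v, c ≤ h x v ∧ h x v ≤ C) ∧
  (∃ C : ℝ, ∀ q : (Fin d → ℝ) × (Fin d → ℝ),
    ‖fderiv ℝ (fun r : (Fin d → ℝ) × (Fin d → ℝ) => h r.1 r.2) q‖ ≤ C)

/-- `h` solves the linear relaxation Boltzmann equation `∂_t h + v·∇_x h = λ(Πh - h)` for `t ≥ 0`. -/
def SolvesLRB (d : ℕ) (lam : ℝ) (h : ℝ → (Fin d → ℝ) → (Fin d → ℝ) → ℝ) : Prop :=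
  ∀ t x v, 0 ≤ t →
    deriv (fun s => h s x v) t + dotp d v (gradx d (h t) x v)
      = lam * (proj d (h t) x - h t x v)

/-- `h` solves the free transport equation `∂_t h + v·∇_x h = 0` for `t ≥ 0`. -/
def SolvesTransport (d : ℕ) (h : ℝ → (Fin d → ℝ) → (Fin d → ℝ) → ℝ) : Prop :=
  ∀ t x v, 0 ≤ t →
    deriv (fun s => h s x v) t + dotp d v (gradx d (h t) x v) = 0

/-- `h` solves the pure relaxation equation `∂_t h = λ(Πh - h)` for `t ≥ 0`. -/
def SolvesCollision (d : ℕ) (lam : ℝ) (h : ℝ → (Fin d → ℝ) → (Fin d → ℝ) → ℝ) : Prop :=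
  ∀ t x v, 0 ≤ t →
    deriv (fun s => h s x v) t = lam * (proj d (h t) x - h t x v)

/-- `h` solves the kinetic Fokker–Planck equation `∂_t h + v·∇_x h = Δ_v h - v·∇_v h` for `t ≥ 0`. -/
def SolvesKFP (d : ℕ) (h : ℝ → (Fin d → ℝ) → (Fin d → ℝ) → ℝ) : Prop :=
  ∀ t x v, 0 ≤ t →
    deriv (fun s => h s x v) t + dotp d v (gradx d (h t) x v)
      = lapv d (h t) x v - dotp d v (gradv d (h t) x v)

/-! ### Bounded continuous functions -/

/-- `f` is continuous and bounded. -/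
def IsBC {α : Type*} [TopologicalSpace α] (f : α → ℝ) : Prop :=
  Continuous f ∧ ∃ C : ℝ, ∀ a, |f a| ≤ C

namespace IsBC

variable {α β : Type*} [TopologicalSpace α] [TopologicalSpace β] {f g : α → ℝ}

lemma add (hf : IsBC f) (hg : IsBC g) : IsBC (fun a => f a + g a) := by
  obtain ⟨hfc, C, hC⟩ := hf
  obtain ⟨hgc, D, hD⟩ := hg
  exact ⟨hfc.add hgc, C + D, fun a => (abs_add_le _ _).trans (add_le_add (hC a) (hD a))⟩

lemma mul (hf : IsBC f) (hg : IsBC g) : IsBC (fun a => f a * g a) := by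
  obtain ⟨hfc, C, hC⟩ := hf
  obtain ⟨hgc, D, hD⟩ := hg
  refine ⟨hfc.mul hgc, C * D, fun a => ?_⟩
  rw [abs_mul]
  exact mul_le_mul (hC a) (hD a) (abs_nonneg _) ((abs_nonneg _).trans (hC a))

lemma const (c : ℝ) : IsBC (fun _ : α => c) := ⟨continuous_const, |c|, fun _ => le_rfl⟩

lemma sub (hf : IsBC f) (hg : IsBC g) : IsBC (fun a => f a - g a) := by
  simpa [sub_eq_add_neg] using hf.add ((const (-1)).mul hg)

lemma pow (hf : IsBC f) (n : ℕ) : IsBC (fun a => f a ^ n) := by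
  induction n with
  | zero => simpa using const 1
  | succ n ih => simpa [pow_succ] using ih.mul hf

lemma div (hf : IsBC f) (hg : IsBC g) {c : ℝ} (hc : 0 < c) (h : ∀ a, c ≤ g a) :
    IsBC (fun a => f a / g a) := by
  obtain ⟨hfc, C, hC⟩ := hf
  refine ⟨hfc.div hg.1 fun a => (hc.trans_le (h a)).ne', C / c, fun a => ?_⟩
  rw [abs_div, abs_of_pos (hc.trans_le (h a))]
  exact div_le_div₀ ((abs_nonneg _).trans (hC a)) (hC a) hc (h a)

lemma sum {ι : Type*} (s : Finset ι) {F : ι → α → ℝ} (hF : ∀ i, IsBC (F i)) :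
    IsBC (fun a => ∑ i ∈ s, F i a) := by
  classical
  induction s using Finset.induction_on with
  | empty => simpa using const 0
  | insert i s hi ih => simpa [Finset.sum_insert hi] using (hF i).add ih

lemma comp (hf : IsBC f) {φ : β → α} (hφ : Continuous φ) : IsBC (fun b => f (φ b)) :=
  ⟨hf.1.comp hφ, hf.2.imp fun _ hC b => hC (φ b)⟩

end IsBC

/-! ### Integration against `ℳ(v) dv dx` -/

lemma gauss_pos (d : ℕ) (v : Fin d → ℝ) : 0 < gauss d v := by
  unfold gauss; positivity

lemma continuous_gauss (d : ℕ) : Continuous (gauss d) := by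
  unfold gauss; fun_prop

lemma integrable_gauss (d : ℕ) : Integrable (gauss d) := by
  have h1 : Integrable (fun x : ℝ => Real.exp (-(1 / 2) * x ^ 2)) :=
    integrable_exp_neg_mul_sq (by norm_num)
  have h2 : Integrable (fun v : Fin d → ℝ => ∏ i, Real.exp (-(1 / 2) * v i ^ 2)) :=
    Integrable.fintype_prod (μ := fun _ : Fin d => (volume : Measure ℝ)) fun _ => h1
  convert h2.const_mul ((2 * Real.pi) ^ (-(d : ℝ) / 2)) using 2 with v
  rw [gauss, ← Real.exp_sum, ← Finset.mul_sum]
  congr 2; ring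

/-- The measure `dx dv` on `[0,1]^d × ℝ^d`, without the Gaussian weight. -/
def nu (d : ℕ) : Measure ((Fin d → ℝ) × (Fin d → ℝ)) :=
  (volume.restrict (cube d)).prod volume

lemma integrable_gauss_nu (d : ℕ) :
    Integrable (fun p : (Fin d → ℝ) × (Fin d → ℝ) => gauss d p.2) (nu d) := by
  have : IsFiniteMeasure (volume.restrict (cube d)) :=
    ⟨by rw [Measure.restrict_apply_univ]; exact isCompact_Icc.measure_lt_top⟩
  exact (integrable_gauss d).comp_snd _

lemma IsBC.integrable {d : ℕ} {F : (Fin d → ℝ) × (Fin d → ℝ) → ℝ} (hF : IsBC F) :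
    Integrable (fun p => F p * gauss d p.2) (nu d) := by
  obtain ⟨hc, C, hC⟩ := hF
  exact (integrable_gauss_nu d).bdd_mul (c := C) hc.aestronglyMeasurable
    (Eventually.of_forall hC)

lemma intMu_eq {d : ℕ} {F : (Fin d → ℝ) → (Fin d → ℝ) → ℝ}
    (hF : IsBC fun p : (Fin d → ℝ) × (Fin d → ℝ) => F p.1 p.2) :
    intMu d F = ∫ p, F p.1 p.2 * gauss d p.2 ∂(nu d) :=
  (integral_prod (μ := volume.restrict (cube d)) (ν := volume) _ hF.integrable).symm

lemma intMu_le_of_le {d : ℕ} {F F₁ F₂ F₃ : (Fin d → ℝ) → (Fin d → ℝ) → ℝ} {a b c : ℝ}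
    (hF : IsBC fun p : (Fin d → ℝ) × (Fin d → ℝ) => F p.1 p.2)
    (hF₁ : IsBC fun p : (Fin d → ℝ) × (Fin d → ℝ) => F₁ p.1 p.2)
    (hF₂ : IsBC fun p : (Fin d → ℝ) × (Fin d → ℝ) => F₂ p.1 p.2)
    (hF₃ : IsBC fun p : (Fin d → ℝ) × (Fin d → ℝ) => F₃ p.1 p.2)
    (hle : ∀ x v, F x v ≤ a * F₁ x v + b * F₂ x v - c * F₃ x v) :
    intMu d F ≤ a * intMu d F₁ + b * intMu d F₂ - c * intMu d F₃ := by
  have h12 : Integrable (fun p => a * (F₁ p.1 p.2 * gauss d p.2)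
      + b * (F₂ p.1 p.2 * gauss d p.2)) (nu d) :=
    (hF₁.integrable.const_mul a).add (hF₂.integrable.const_mul b)
  rw [intMu_eq hF, intMu_eq hF₁, intMu_eq hF₂, intMu_eq hF₃, ← integral_const_mul,
    ← integral_const_mul, ← integral_const_mul,
    ← integral_add (hF₁.integrable.const_mul a) (hF₂.integrable.const_mul b),
    ← integral_sub h12 (hF₃.integrable.const_mul c)]
  refine integral_mono hF.integrable (h12.sub (hF₃.integrable.const_mul c)) fun p => ?_
  have := mul_le_mul_of_nonneg_right (hle p.1 p.2) (gauss_pos d p.2).le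
  simp only
  linarith

lemma hasDerivAt_intMu {d : ℕ} {Φ Ψ : ℝ × (Fin d → ℝ) × (Fin d → ℝ) → ℝ}
    (hΦ : IsBC Φ) (hΨ : IsBC Ψ)
    (hder : ∀ t x v, HasDerivAt (fun s => Φ (s, x, v)) (Ψ (t, x, v)) t) (t : ℝ) :
    HasDerivAt (fun s => intMu d fun x v => Φ (s, x, v)) (intMu d fun x v => Ψ (t, x, v)) t := by
  have hΦs : ∀ s, IsBC fun p : (Fin d → ℝ) × (Fin d → ℝ) => Φ (s, p.1, p.2) :=
    fun s => hΦ.comp (by fun_prop)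
  have hΨs : ∀ s, IsBC fun p : (Fin d → ℝ) × (Fin d → ℝ) => Ψ (s, p.1, p.2) :=
    fun s => hΨ.comp (by fun_prop)
  obtain ⟨C, hC⟩ := hΨ.2
  have key := hasDerivAt_integral_of_dominated_loc_of_deriv_le (μ := nu d) (x₀ := t)
    (s := Set.univ)
    (F := fun s p => Φ (s, p.1, p.2) * gauss d p.2)
    (F' := fun s p => Ψ (s, p.1, p.2) * gauss d p.2)
    (bound := fun p => C * gauss d p.2) Filter.univ_mem
    (Eventually.of_forall fun s => (hΦs s).integrable.aestronglyMeasurable)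
    (hΦs t).integrable (hΨs t).integrable.aestronglyMeasurable
    (Eventually.of_forall fun p s _ => by
      rw [norm_mul, Real.norm_of_nonneg (gauss_pos d p.2).le]
      exact mul_le_mul_of_nonneg_right (hC _) (gauss_pos d p.2).le)
    ((integrable_gauss_nu d).const_mul C)
    (Eventually.of_forall fun p s _ => (hder s p.1 p.2).mul_const _)
  rw [intMu_eq (hΨs t)]
  have hfun : (fun s => intMu d fun x v => Φ (s, x, v))
      = fun s => ∫ p, Φ (s, p.1, p.2) * gauss d p.2 ∂(nu d) :=
    funext fun s => intMu_eq (hΦs s)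
  rw [hfun]
  exact key.2

lemma proj_lower_bound {d : ℕ} {f : (Fin d → ℝ) → (Fin d → ℝ) → ℝ}
    (hf : IsBC fun p : (Fin d → ℝ) × (Fin d → ℝ) => f p.1 p.2) {c : ℝ}
    (hc : ∀ x v, c ≤ f x v) (x : Fin d → ℝ) : c * ∫ v, gauss d v ≤ proj d f x := by
  obtain ⟨hcont, C, hC⟩ := hf.comp (φ := fun v : Fin d → ℝ => (x, v)) (by fun_prop)
  rw [proj, ← integral_const_mul]
  exact integral_mono ((integrable_gauss d).const_mul c)
    ((integrable_gauss d).bdd_mul (c := C) hcont.aestronglyMeasurable (Eventually.of_forall hC))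
    fun v => mul_le_mul_of_nonneg_right (hc x v) (gauss_pos d v).le

lemma integral_gauss_pos (d : ℕ) : 0 < ∫ v, gauss d v :=
  integral_pos_of_integrable_nonneg_nonzero (x := 0) (continuous_gauss d) (integrable_gauss d)
    (fun v => (gauss_pos d v).le) (gauss_pos d 0).ne'

/-! ### Derivatives on phase space-time -/

/-- Space-time-velocity, with points `(t, x, v)`. -/
abbrev PS (d : ℕ) : Type := ℝ × (Fin d → ℝ) × (Fin d → ℝ)

/-- The unit vector in the time direction. -/
def eT (d : ℕ) : PS d := (1, 0, 0)

/-- The `i`-th unit vector in the space direction. -/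
def eX {d : ℕ} (i : Fin d) : PS d := (0, Pi.single i 1, 0)

/-- The `i`-th unit vector in the velocity direction. -/
def eV {d : ℕ} (i : Fin d) : PS d := (0, 0, Pi.single i 1)

section slices

variable {d : ℕ} {E : Type*} [NormedAddCommGroup E] [NormedSpace ℝ E] {K : PS d → E}

lemma hasDerivAt_time (hK : Differentiable ℝ K) (t : ℝ) (x v : Fin d → ℝ) :
    HasDerivAt (fun s => K (s, x, v)) (fderiv ℝ K (t, x, v) (eT d)) t := by
  have h1 : HasDerivAt (fun s : ℝ => ((s, x, v) : PS d)) (eT d) t :=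
    (hasDerivAt_id t).prodMk (hasDerivAt_const t (x, v))
  exact (hK (t, x, v)).hasFDerivAt.comp_hasDerivAt t h1

lemma fderiv_space (hK : Differentiable ℝ K) (t : ℝ) (x v : Fin d → ℝ) (i : Fin d) :
    fderiv ℝ (fun y => K (t, y, v)) x (Pi.single i 1) = fderiv ℝ K (t, x, v) (eX i) := by
  have hid : HasFDerivAt (fun y : Fin d → ℝ => y) (.id ℝ _) x := hasFDerivAt_id x
  have h1 : HasFDerivAt (fun y : Fin d → ℝ => ((t, y, v) : PS d)) _ x :=
    (hasFDerivAt_const t x).prodMk (hid.prodMk (hasFDerivAt_const v x))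
  have h2 := (hK (t, x, v)).hasFDerivAt.comp x h1
  have h3 := h2.fderiv
  simp only [Function.comp_def] at h3
  rw [h3]
  simp [eX]

lemma fderiv_velocity (hK : Differentiable ℝ K) (t : ℝ) (x v : Fin d → ℝ) (i : Fin d) :
    fderiv ℝ (fun w => K (t, x, w)) v (Pi.single i 1) = fderiv ℝ K (t, x, v) (eV i) := by
  have hid : HasFDerivAt (fun w : Fin d → ℝ => w) (.id ℝ _) v := hasFDerivAt_id v
  have h1 : HasFDerivAt (fun w : Fin d → ℝ => ((t, x, w) : PS d)) _ v :=
    (hasFDerivAt_const t v).prodMk ((hasFDerivAt_const x v).prodMk hid)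
  have h2 := (hK (t, x, v)).hasFDerivAt.comp v h1
  have h3 := h2.fderiv
  simp only [Function.comp_def] at h3
  rw [h3]
  simp [eV]

end slices

/-- Young's inequality `b a ≤ ε b² W / H + a² H / (ε W)`, where `W = Πh / h` and `H = h`. -/
lemma young_weighted {a b W H ε : ℝ} (hW : 0 < W) (hH : 0 < H) (hε : 0 < ε) :
    b * a ≤ ε * (b ^ 2 / H * W) + 1 / ε * (a ^ 2 / W * H) := by
  have h1 : ε * (b ^ 2 / H * W) + 1 / ε * (a ^ 2 / W * H) - b * a
      = ((ε * b * W - a * H) ^ 2 + ε * b * W * (a * H)) / (ε * H * W) := by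
    field_simp
    ring
  have h2 : 0 ≤ (ε * b * W - a * H) ^ 2 + ε * b * W * (a * H) := by
    nlinarith [sq_nonneg (ε * b * W - a * H), sq_nonneg (ε * b * W + a * H)]
  have h3 := div_nonneg h2 (by positivity : 0 ≤ ε * H * W)
  linarith

/-- Evolution of the mixed Fisher term under the relaxation collision operator:
for every `ε > 0`, `(d/dt) I^M(h_t) ≤ λ ε I^{ΠV/V}(h_t) + (λ/ε) I^{ΠX/X}(h_t) - λ I^M(h_t)`. -/
theorem mixed_fisher_collision
    (d : ℕ) (hd : 1 ≤ d) (lam : ℝ) (hlam : 0 < lam)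
    (h : ℝ → (Fin d → ℝ) → (Fin d → ℝ) → ℝ)
    (hreg : Regular d h)
    (hpde : SolvesCollision d lam h) :
    ∀ ε : ℝ, 0 < ε → ∀ t : ℝ, 0 ≤ t →
      ∃ c : ℝ, HasDerivAt (fun s => IM d (h s)) c t ∧
        c ≤ lam * ε * IPiVV d (h t) + (lam / ε) * IPiXX d (h t) - lam * IM d (h t) := by
  intro ε hε t ht
  obtain ⟨hsm, -, ⟨c, C, hc, hbd⟩, hder⟩ := hreg
  set H : PS d → ℝ := fun q => h q.1 q.2.1 q.2.2 with hHdef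
  have hH : ∀ t x v, h t x v = H (t, x, v) := fun _ _ _ => rfl
  have hHlow : ∀ q, c ≤ H q := fun q => (hbd _ _ _).1
  have hHup : ∀ q, H q ≤ C := fun q => (hbd _ _ _).2
  have hHpos : ∀ q, 0 < H q := fun q => hc.trans_le (hHlow q)
  have hdiff : Differentiable ℝ H := hsm.differentiable (by simp)
  have hsm1 : ContDiff ℝ (⊤ : ℕ∞) (fderiv ℝ H) := hsm.fderiv_right (by simp)
  have hdiff1 : Differentiable ℝ (fderiv ℝ H) := hsm1.differentiable (by simp)
  have hsm2 : ContDiff ℝ (⊤ : ℕ∞) (fderiv ℝ (fderiv ℝ H)) := hsm1.fderiv_right (by simp)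
  have hdir : ∀ e, Differentiable ℝ fun q => fderiv ℝ H q e := fun e => by fun_prop
  have hdir' : ∀ e e' q, fderiv ℝ (fun q => fderiv ℝ H q e) q e'
      = fderiv ℝ (fderiv ℝ H) q e' e := fun e e' q => by
    rw [fderiv_clm_apply (hdiff1 q) (by fun_prop)]; simp
  have hsymm : ∀ q e e', fderiv ℝ (fderiv ℝ H) q e e' = fderiv ℝ (fderiv ℝ H) q e' e :=
    fun q e e' => (hsm.contDiffAt.isSymmSndFDerivAt
      (by simp only [minSmoothness_of_isRCLikeNormedField]; exact WithTop.coe_le_coe.2 le_top)) e e'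
  have bH : IsBC H := ⟨hsm.continuous, C, fun q => by
    rw [abs_of_pos (hHpos q)]; exact hHup q⟩
  have bD1 : ∀ e, IsBC fun q => fderiv ℝ H q e := fun e => by
    obtain ⟨C₁, hC₁⟩ := hder 1
    refine ⟨(hdir e).continuous, C₁ * ‖e‖, fun q => ?_⟩
    have := hC₁ q
    rw [norm_iteratedFDeriv_one] at this
    exact (fderiv ℝ H q).le_of_opNorm_le this e
  have bD2 : ∀ e e', IsBC fun q => fderiv ℝ (fderiv ℝ H) q e e' := fun e e' => by
    obtain ⟨C₂, hC₂⟩ := hder 2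
    refine ⟨(hsm2.continuous.clm_apply continuous_const).clm_apply continuous_const,
      C₂ * ‖e‖ * ‖e'‖, fun q => ?_⟩
    have := hC₂ q
    rw [← norm_iteratedFDeriv_fderiv, norm_iteratedFDeriv_one] at this
    exact ((fderiv ℝ (fderiv ℝ H) q e).le_opNorm e').trans
      (mul_le_mul_of_nonneg_right ((fderiv ℝ (fderiv ℝ H) q).le_of_opNorm_le this e)
        (norm_nonneg _))
  have hgx : ∀ s x v i, gradx d (h s) x v i = fderiv ℝ H (s, x, v) (eX i) :=
    fun s x v i => fderiv_space hdiff s x v i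
  have hgv : ∀ s x v i, gradv d (h s) x v i = fderiv ℝ H (s, x, v) (eV i) :=
    fun s x v i => fderiv_velocity hdiff s x v i
  -- The integrand of `I^M` and its time derivative, as functions on phase space-time.
  set Φ : PS d → ℝ := fun q => (∑ i, fderiv ℝ H q (eX i) * fderiv ℝ H q (eV i)) / H q with hΦ
  set Ψ : PS d → ℝ := fun q =>
    ((∑ i, (fderiv ℝ (fderiv ℝ H) q (eT d) (eX i) * fderiv ℝ H q (eV i)
        + fderiv ℝ H q (eX i) * fderiv ℝ (fderiv ℝ H) q (eT d) (eV i))) * H q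
      - (∑ i, fderiv ℝ H q (eX i) * fderiv ℝ H q (eV i)) * fderiv ℝ H q (eT d)) / H q ^ 2 with hΨ
  have bΦ : IsBC Φ := (IsBC.sum _ fun i => (bD1 _).mul (bD1 _)).div bH hc hHlow
  have bΨ : IsBC Ψ :=
    (((IsBC.sum _ fun i => ((bD2 _ _).mul (bD1 _)).add ((bD1 _).mul (bD2 _ _))).mul bH).sub
      ((IsBC.sum _ fun i => (bD1 _).mul (bD1 _)).mul (bD1 _))).div (bH.pow 2)
      (pow_pos hc 2) fun q => pow_le_pow_left₀ hc.le (hHlow q) 2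
  have hΦΨ : ∀ t x v, HasDerivAt (fun s => Φ (s, x, v)) (Ψ (t, x, v)) t := fun t x v => by
    refine HasDerivAt.div (HasDerivAt.fun_sum fun i _ => ?_) (hasDerivAt_time hdiff t x v)
      (hHpos _).ne'
    have h1 := hasDerivAt_time (hdir (eX i)) t x v
    have h2 := hasDerivAt_time (hdir (eV i)) t x v
    rw [hdir'] at h1 h2
    exact h1.mul h2
  have hIM : ∀ s, IM d (h s) = intMu d fun x v => Φ (s, x, v) := fun s => by
    simp only [IM, dotp, hgx, hgv, hH, hΦ]
  refine ⟨intMu d fun x v => Ψ (t, x, v), ?_, ?_⟩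
  · simp only [hIM]
    exact hasDerivAt_intMu bΦ bΨ hΦΨ t
  -- The equation expresses `Πh` through `h` and `∂ₜh`.
  have hP : ∀ x v, proj d (h t) x = H (t, x, v) + fderiv ℝ H (t, x, v) (eT d) / lam :=
    fun x v => by
      have h1 := hpde t x v ht
      rw [(hasDerivAt_time hdiff t x v).deriv] at h1
      rw [h1, hH]
      field_simp
      ring
  have hslice : Continuous fun p : (Fin d → ℝ) × (Fin d → ℝ) => ((t, p.1, p.2) : PS d) := by
    fun_prop
  obtain ⟨m, hm, hPlow⟩ : ∃ m > 0, ∀ x, m ≤ proj d (h t) x :=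
    ⟨_, mul_pos hc (integral_gauss_pos d),
      proj_lower_bound (bH.comp hslice) fun x v => (hbd t x v).1⟩
  -- `Πh` does not depend on `v`.
  have hGv : ∀ x v i, fderiv ℝ (fderiv ℝ H) (t, x, v) (eT d) (eV i)
      = -lam * fderiv ℝ H (t, x, v) (eV i) := fun x v i => by
    have hK : ∀ q, HasFDerivAt (fun q => H q + fderiv ℝ H q (eT d) * lam⁻¹)
        (fderiv ℝ H q + lam⁻¹ • fderiv ℝ (fun q => fderiv ℝ H q (eT d)) q) q := fun q =>
      (hdiff q).hasFDerivAt.add ((hdir (eT d) q).hasFDerivAt.mul_const lam⁻¹)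
    have h1 := fderiv_velocity (fun q => (hK q).differentiableAt) t x v i
    rw [(hK _).fderiv] at h1
    simp only [← div_eq_mul_inv, ← hP x] at h1
    simp only [fderiv_fun_const, Pi.zero_apply, zero_apply, add_apply,
      smul_apply, hdir', smul_eq_mul] at h1
    rw [hsymm]
    field_simp at h1
    linarith
  have hGx : ∀ x v i, gradx d (fun y w => proj d (h t) y / h t y w) x v i
      = (fderiv ℝ (fderiv ℝ H) (t, x, v) (eT d) (eX i) * H (t, x, v)
        - fderiv ℝ H (t, x, v) (eT d) * fderiv ℝ H (t, x, v) (eX i)) / (lam * H (t, x, v) ^ 2) :=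
    fun x v i => by
      have hK : ∀ q, HasFDerivAt (fun q => 1 + lam⁻¹ * (fderiv ℝ H q (eT d) * (H q)⁻¹)) _ q :=
        fun q => (((hdir (eT d) q).hasFDerivAt.mul
          ((hasDerivAt_inv (hHpos q).ne').comp_hasFDerivAt q
            (hdiff q).hasFDerivAt)).const_mul lam⁻¹).const_add 1
      have h0 : (fun y => proj d (h t) y / h t y v)
          = fun y => 1 + lam⁻¹ * (fderiv ℝ H (t, y, v) (eT d) * (H (t, y, v))⁻¹) := by
        funext y
        have := (hHpos (t, y, v)).ne'
        rw [hP y v, hH]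
        field_simp
      have hne := (hHpos (t, x, v)).ne'
      rw [gradx, h0, fderiv_space (fun q => (hK q).differentiableAt) t x v i, (hK _).fderiv]
      simp only [smul_apply, add_apply, hdir',
        smul_eq_mul, Function.comp_apply]
      rw [hsymm (t, x, v) (eX i)]
      field_simp
      ring
  have hWpos : ∀ x v, 0 < proj d (h t) x / h t x v := fun x v =>
    div_pos (hm.trans_le (hPlow x)) (hHpos (t, x, v))
  have bHt := bH.comp hslice
  have bP : IsBC fun p : (Fin d → ℝ) × (Fin d → ℝ) => proj d (h t) p.1 := by
    have h1 : (fun p : (Fin d → ℝ) × (Fin d → ℝ) => proj d (h t) p.1)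
        = fun p => H (t, p.1, p.2) + fderiv ℝ H (t, p.1, p.2) (eT d) / lam :=
      funext fun p => hP p.1 p.2
    rw [h1]
    exact bHt.add (((bD1 (eT d)).comp hslice).div (IsBC.const lam) hlam fun _ => le_rfl)
  have bW : IsBC fun p : (Fin d → ℝ) × (Fin d → ℝ) => proj d (h t) p.1 / h t p.1 p.2 :=
    bP.div bHt hc fun p => hHlow (t, p.1, p.2)
  have hCpos : 0 < C := (hHpos (0, 0, 0)).trans_le (hHup _)
  have hWlow : ∀ p : (Fin d → ℝ) × (Fin d → ℝ),
      m / C ≤ proj d (h t) p.1 / h t p.1 p.2 := fun p =>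
    div_le_div₀ (hm.le.trans (hPlow _)) (hPlow _) (hHpos (t, p.1, p.2)) (hHup (t, p.1, p.2))
  rw [hIM t, IPiVV, IPiXX]
  refine intMu_le_of_le (bΨ.comp hslice) ?_ ?_ (bΦ.comp hslice) fun x v => ?_
  · simp only [nsq, hgv]
    exact ((IsBC.sum _ fun i => ((bD1 (eV i)).comp hslice).pow 2).div bHt hc
      fun p => hHlow _).mul bW
  · simp only [nsq, hGx]
    refine ((IsBC.sum _ fun i => IsBC.pow (IsBC.div ?_ ((IsBC.const lam).mul (bHt.pow 2))
      (mul_pos hlam (pow_pos hc 2)) fun p => ?_) 2).div bW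
      (div_pos hm hCpos) hWlow).mul bHt
    · exact (((bD2 _ _).comp hslice).mul bHt).sub (((bD1 _).comp hslice).mul
        ((bD1 _).comp hslice))
    · exact mul_le_mul_of_nonneg_left (pow_le_pow_left₀ hc.le (hHlow _) 2) hlam.le
  · have hpos := hHpos (t, x, v)
    -- The pointwise identity for the time derivative of the integrand.
    have hid : Ψ (t, x, v) = lam * ∑ i, gradv d (h t) x v i *
        gradx d (fun y w => proj d (h t) y / h t y w) x v i - lam * Φ (t, x, v) := by
      simp only [hΨ, hΦ, hGv, hgv, hGx]
      rw [Finset.sum_mul, Finset.sum_mul, ← Finset.sum_sub_distrib, Finset.sum_div,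
        Finset.sum_div, Finset.mul_sum, Finset.mul_sum, ← Finset.sum_sub_distrib]
      refine Finset.sum_congr rfl fun i _ => ?_
      field_simp
      ring
    rw [hid]
    have hsum : ∑ i, gradv d (h t) x v i *
        gradx d (fun y w => proj d (h t) y / h t y w) x v i
        ≤ ε * (nsq d (gradv d (h t) x v) / h t x v * (proj d (h t) x / h t x v))
          + 1 / ε * (nsq d (gradx d (fun y w => proj d (h t) y / h t y w) x v)
            / (proj d (h t) x / h t x v) * h t x v) := by
      rw [nsq, nsq, Finset.sum_div, Finset.sum_div, Finset.sum_mul, Finset.sum_mul,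
        Finset.mul_sum, Finset.mul_sum, ← Finset.sum_add_distrib]
      exact Finset.sum_le_sum fun i _ => young_weighted (hWpos x v) hpos hε
    have := mul_le_mul_of_nonneg_left hsum hlam.le
    rw [mul_add, ← mul_assoc lam ε, ← mul_assoc lam (1 / ε), mul_one_div] at this
    linarith

end
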